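/- arXiv:1409.3702 — 5 statements merged into one kernel-verified Lean document; each statement's English description precedes it below -/
import Mathlib

section
/- Let G be a countable directed graph, F : E → ℝ a function and β ∈ ℝ. For every A(β)-harmonic vector ψ ∈ [0,∞)^V there exists a Borel measure m on the space P(G) of infinite paths such that m(Z′(μ)) = e^{−βF(μ)} ψ_{r(μ)} for every finite path μ of length ≥ 1 and m(Z′(v)) = ψ_v for every vertex v; moreover m is the unique Borel measure on P(G) with these values on all cylinder sets. -/
open scoped ENNReal NNReal Classical
open Filter MeasureTheory

/-- A countable directed graph: countable sets of vertices and edges with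
source and range maps. -/
structure DirGraph where
  V : Type
  E : Type
  countV : Countable V
  countE : Countable E
  s : E → V
  r : E → V

namespace DirGraph

attribute [instance] countV countE

variable (G : DirGraph)

/-- `μ` is a finite path (a vertex counts as the empty path). -/
def IsPath (μ : List G.E) : Prop := μ.Chain' (fun e f => G.r e = G.s f)

/-- `μ` is a finite path from `u` to `w`. -/
def IsPathFrom (μ : List G.E) (u w : G.V) : Prop :=
  G.IsPath μ ∧ (∀ e ∈ μ.head?, G.s e = u) ∧ (∀ e ∈ μ.getLast?, G.r e = w) ∧ (μ = [] → u = w)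

/-- A function `F : E → ℝ` extended to finite paths. -/
def Fsum (F : G.E → ℝ) (μ : List G.E) : ℝ := (μ.map F).sum

/-- The matrix `A(β)` over the vertices, with entries in `[0,∞]`:
`A(β)_{uw} = Σ_{e : u → w} e^{-β F(e)}`. -/
noncomputable def Amat (F : G.E → ℝ) (β : ℝ) (u w : G.V) : ℝ≥0∞ :=
  ∑' e : {e : G.E // G.s e = u ∧ G.r e = w}, ENNReal.ofReal (Real.exp (-β * F e.1))

/-- The powers of the matrix `A(β)`, defined recursively; `A(β)⁰` is the identity matrix. -/
noncomputable def Apow (F : G.E → ℝ) (β : ℝ) : ℕ → G.V → G.V → ℝ≥0∞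
  | 0, u, w => if u = w then 1 else 0
  | n + 1, u, w => ∑' x : G.V, G.Amat F β u x * Apow F β n x w

/-- A sink is a vertex emitting no edges. -/
def IsSink (v : G.V) : Prop := ∀ e : G.E, G.s e ≠ v

/-- An infinite emitter is a vertex emitting infinitely many edges. -/
def InfEmitter (v : G.V) : Prop := {e : G.E | G.s e = v}.Infinite

/-- A set of vertices is hereditary when it is closed under following edges. -/
def Hereditary (H : Set G.V) : Prop := ∀ e : G.E, G.s e ∈ H → G.r e ∈ H

/-- A set of vertices `H` is saturated when every vertex of `V ∖ V∞` all of whose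
successors lie in `H` belongs to `H`. -/
def Saturated (H : Set G.V) : Prop :=
  ∀ v : G.V, ¬ G.IsSink v → ¬ G.InfEmitter v → (∀ e : G.E, G.s e = v → G.r e ∈ H) → v ∈ H

/-- `G` is cofinal when the only nonempty hereditary and saturated set of
vertices is the whole vertex set. -/
def Cofinal : Prop :=
  ∀ H : Set G.V, H.Nonempty → G.Hereditary H → G.Saturated H → H = Set.univ

/-- The set of non-wandering vertices: those lying on a loop of length ≥ 1. -/
def NW : Set G.V := {v | ∃ μ : List G.E, μ ≠ [] ∧ G.IsPathFrom μ v v}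

/-- `G` is strongly connected when there is a finite path between any two vertices. -/
def StronglyConnected : Prop := ∀ u w : G.V, ∃ μ : List G.E, G.IsPathFrom μ u w

/-- `G` is row-finite when every vertex emits only finitely many edges. -/
def RowFinite : Prop := ∀ v : G.V, {e : G.E | G.s e = v}.Finite

/-- `ψ` is an `A(β)`-harmonic vector. -/
def Harmonic (F : G.E → ℝ) (β : ℝ) (ψ : G.V → ℝ≥0) : Prop :=
  ∀ v : G.V, ∑' w : G.V, G.Amat F β v w * ψ w = (ψ v : ℝ≥0∞)

/-- `A(β)` is transient when `Σ_n A(β)ⁿ_{vv} < ∞` for every vertex. -/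
def Transient (F : G.E → ℝ) (β : ℝ) : Prop :=
  ∀ v : G.V, ∑' n : ℕ, G.Apow F β n v v ≠ ⊤

/-- `A(β)` is recurrent when `Σ_n A(β)ⁿ_{vv} = ∞` for some vertex. -/
def Recurrent (F : G.E → ℝ) (β : ℝ) : Prop :=
  ∃ v : G.V, ∑' n : ℕ, G.Apow F β n v v = ⊤

/-- An exit path: a sequence of vertices joined by edges which leaves every
finite set of vertices. -/
def IsExitPath (t : ℕ → G.V) : Prop :=
  (∀ i : ℕ, ∃ e : G.E, G.s e = t i ∧ G.r e = t (i + 1)) ∧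
  ∀ M : Set G.V, M.Finite → ∃ N : ℕ, ∀ i : ℕ, N ≤ i → t i ∉ M

/-- Tail equivalence of vertex sequences. -/
def TailEquiv (t t' : ℕ → G.V) : Prop :=
  ∃ k : ℤ, ∃ N : ℕ, ∀ i : ℕ, N ≤ i → 0 ≤ (i : ℤ) + k ∧ t ((i : ℤ) + k).toNat = t' i

/-- A simple loop based at `v`: a loop which returns to `v` only at the very end. -/
def IsSimpleLoop (v : G.V) (μ : List G.E) : Prop :=
  μ ≠ [] ∧ G.IsPathFrom μ v v ∧
  ∀ (i : ℕ) (h : i + 1 < μ.length), G.r (μ.get ⟨i, Nat.lt_of_succ_lt h⟩) ≠ v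

/-- `lⁿ_{vv}(β)`: the weighted number of simple loops of length `n` based at `v`. -/
noncomputable def loopSum (F : G.E → ℝ) (β : ℝ) (v : G.V) (n : ℕ) : ℝ≥0∞ :=
  ∑' μ : {μ : List G.E // μ.length = n ∧ G.IsSimpleLoop v μ},
    ENNReal.ofReal (Real.exp (-β * G.Fsum F μ.1))

/-- The space `P(G)` of infinite paths in `G`. -/
def PathSpace : Type := {p : ℕ → G.E // ∀ i : ℕ, G.r (p i) = G.s (p (i + 1))}

/-- The Borel σ-algebra of `P(G)` as a subspace of the product `E^ℕ` with `E`
discrete (for a countable discrete space, the Borel σ-algebra is the power set). -/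
instance : MeasurableSpace G.PathSpace :=
  letI : MeasurableSpace G.E := ⊤
  inferInstanceAs (MeasurableSpace {p : ℕ → G.E // ∀ i : ℕ, G.r (p i) = G.s (p (i + 1))})

/-- The cylinder set `Z'(v)` of infinite paths starting at the vertex `v`. -/
def cylV (v : G.V) : Set G.PathSpace := {p | G.s (p.1 0) = v}

/-- The cylinder set `Z'(μ)` of infinite paths beginning with the finite path `μ`. -/
def cylP (μ : List G.E) : Set G.PathSpace :=
  {p | ∀ (i : ℕ) (h : i < μ.length), p.1 i = μ.get ⟨i, h⟩}

/-- The set `P(G)_wan` of wandering infinite paths: those visiting each vertex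
only finitely many times. -/
def wanSet : Set G.PathSpace := {p | ∀ v : G.V, {i : ℕ | G.s (p.1 i) = v}.Finite}

end DirGraph

namespace PathMeasureAux

open ProbabilityTheory Preorder

/-- the set of sequences agreeing with `p` up to time `n` -/
def cyl {E : Type} (n : ℕ) (p : ℕ → E) : Set (ℕ → E) := {x | ∀ i ≤ n, x i = p i}

lemma cyl_eq {E : Type} (n : ℕ) (p : ℕ → E) :
    cyl n p = (frestrictLe (π := fun _ => E) n) ⁻¹' {frestrictLe (π := fun _ => E) n p} := by
  ext x
  simp only [cyl, Set.mem_ofPred_eq, Set.mem_preimage, Set.mem_singleton_iff]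
  constructor
  · intro h
    funext i
    exact h i.1 (Finset.mem_Iic.1 i.2)
  · intro h i hi
    exact congrFun h ⟨i, Finset.mem_Iic.2 hi⟩

lemma markov_exists {E : Type} [Countable E] [MeasurableSpace E] [DiscreteMeasurableSpace E]
    (P : E → Measure E) (hP : ∀ e, IsProbabilityMeasure (P e)) (w : E → ℝ≥0∞) :
    ∃ M : Measure (ℕ → E), (∀ p, M (cyl 0 p) = w (p 0)) ∧
      ∀ n p, M (cyl (n + 1) p) = M (cyl n p) * P (p n) {p (n + 1)} := by
  let κ : (n : ℕ) → Kernel ((i : Finset.Iic n) → (fun _ : ℕ => E) i) E := fun n =>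
    (Kernel.ofFunOfCountable P).comap (fun x => x ⟨n, Finset.mem_Iic.2 le_rfl⟩)
      (measurable_pi_apply _)
  have hκ : ∀ n x, κ n x = P (x ⟨n, Finset.mem_Iic.2 le_rfl⟩) := fun n x => rfl
  haveI : ∀ n, IsMarkovKernel (κ n) := fun n => ⟨fun x => by rw [hκ]; infer_instance⟩
  let T : E → Measure (ℕ → E) := fun e => Kernel.traj (X := fun _ => E) κ 0 (fun _ => e)
  have hmeas : ∀ n (p : ℕ → E), MeasurableSet (cyl n p) := by
    intro n p
    rw [cyl_eq]
    exact measurable_frestrictLe n (measurableSet_singleton _)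
  have hT0 : ∀ e p, T e (cyl 0 p) = if e = p 0 then 1 else 0 := by
    intro e p
    rw [cyl_eq, ← Measure.map_apply (measurable_frestrictLe 0) (measurableSet_singleton _)]
    rw [Kernel.traj_map_frestrictLe_apply, Kernel.partialTraj_self, Kernel.id_apply,
      Measure.dirac_apply' _ (measurableSet_singleton _)]
    simp only [Set.indicator, Set.mem_singleton_iff, Pi.one_apply]
    congr 1
    apply propext
    constructor
    · intro h
      exact congrFun h ⟨0, by simp⟩
    · intro h
      funext i
      have : i.1 = 0 := Nat.le_zero.1 (Finset.mem_Iic.1 i.2)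
      simp [h, frestrictLe, this]
  have hT1 : ∀ e n p, T e (cyl (n + 1) p) = T e (cyl n p) * P (p n) {p (n + 1)} := by
    intro e n p
    have h1 : cyl (n + 1) p = (fun x : ℕ → E => (frestrictLe (π := fun _ => E) n x, x (n + 1))) ⁻¹'
        ({frestrictLe (π := fun _ => E) n p} ×ˢ {p (n + 1)}) := by
      ext x
      have h2 : x ∈ cyl n p ↔ frestrictLe (π := fun _ => E) n x = frestrictLe n p := by
        rw [cyl_eq]; rfl
      simp only [Set.mem_preimage, Set.mem_prod, Set.mem_singleton_iff, ← h2]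
      simp only [cyl, Set.mem_ofPred_eq]
      constructor
      · intro h
        exact ⟨fun i hi => h i (by omega), h _ le_rfl⟩
      · rintro ⟨h, h'⟩ i hi
        rcases Nat.lt_or_ge n i with h3 | h3
        · obtain rfl : i = n + 1 := by omega
          exact h'
        · exact h i h3
    rw [h1, ← Measure.map_apply (by fun_prop) ((measurableSet_singleton _).prod
      (measurableSet_singleton _))]
    rw [← Kernel.partialTraj_compProd_eq_map_traj (Nat.zero_le n),
      Measure.compProd_apply_prod (measurableSet_singleton _) (measurableSet_singleton _),
      lintegral_singleton, hκ, ← Kernel.traj_map_frestrictLe_apply,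
      Measure.map_apply (measurable_frestrictLe n) (measurableSet_singleton _), ← cyl_eq, mul_comm]
    rfl
  refine ⟨Measure.sum fun e => w e • T e, ?_, ?_⟩
  · intro p
    rw [Measure.sum_apply _ (hmeas _ _)]
    simp only [Measure.smul_apply, hT0, smul_eq_mul, mul_ite, mul_one, mul_zero]
    exact tsum_ite_eq (p 0) w
  · intro n p
    rw [Measure.sum_apply _ (hmeas _ _), Measure.sum_apply _ (hmeas _ _), ← ENNReal.tsum_mul_right]
    simp only [Measure.smul_apply, hT1, smul_eq_mul, mul_assoc]

variable (G : DirGraph) (F : G.E → ℝ) (β : ℝ) (ψ : G.V → ℝ≥0)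

/-- weight of an edge -/
noncomputable def c (e : G.E) : ℝ≥0∞ := ENNReal.ofReal (Real.exp (-β * F e))

lemma harm (hψ : G.Harmonic F β ψ) (v : G.V) :
    ∑' e : G.E, (if G.s e = v then c G F β e * ψ (G.r e) else 0) = ψ v := by
  rw [← hψ v]
  have h1 : ∀ w, G.Amat F β v w * ψ w =
      ∑' e : G.E, if G.r e = w then (if G.s e = v then c G F β e * ψ (G.r e) else 0) else 0 := by
    intro w
    rw [DirGraph.Amat, ← ENNReal.tsum_mul_right]
    refine (tsum_subtype {e : G.E | G.s e = v ∧ G.r e = w}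
      (fun e => ENNReal.ofReal (Real.exp (-β * F e)) * ψ w)).trans ?_
    refine tsum_congr fun e => ?_
    by_cases h2 : G.s e = v <;> by_cases h3 : G.r e = w <;> simp [h2, h3, c, Set.indicator]
  simp_rw [h1]
  rw [ENNReal.tsum_comm]
  refine tsum_congr fun e => ?_
  symm
  rw [tsum_eq_single (G.r e) (fun w hw => if_neg (Ne.symm hw)), if_pos rfl]

/-- transition probabilities -/
noncomputable def P [MeasurableSpace G.E] (e : G.E) : Measure G.E :=
  if ψ (G.r e) = 0 then Measure.dirac e else
    Measure.sum fun f => (((ψ (G.r e) : ℝ≥0∞))⁻¹ *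
      (if G.s f = G.r e then c G F β f * ψ (G.r f) else 0)) • Measure.dirac f

lemma P_prob (hψ : G.Harmonic F β ψ) [MeasurableSpace G.E] (e : G.E) :
    IsProbabilityMeasure (P G F β ψ e) := by
  unfold P
  split_ifs with h
  · infer_instance
  · constructor
    rw [Measure.sum_apply _ MeasurableSet.univ]
    simp only [Measure.smul_apply, measure_univ, smul_eq_mul, mul_one]
    rw [ENNReal.tsum_mul_left, harm G F β ψ hψ]
    exact ENNReal.inv_mul_cancel (by simpa using h) ENNReal.coe_ne_top

lemma P_mul [MeasurableSpace G.E] [MeasurableSingletonClass G.E] (e f : G.E) (h : ψ (G.r e) ≠ 0) :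
    ψ (G.r e) * P G F β ψ e {f} = if G.s f = G.r e then c G F β f * ψ (G.r f) else 0 := by
  unfold P
  rw [if_neg h, Measure.sum_smul_dirac_singleton, ← mul_assoc,
    ENNReal.mul_inv_cancel (by simpa using h) ENNReal.coe_ne_top, one_mul]

lemma psi_zero (hψ : G.Harmonic F β ψ) (e f : G.E) (h : ψ (G.r e) = 0) (h2 : G.s f = G.r e) :
    c G F β f * ψ (G.r f) = 0 := by
  have h1 := harm G F β ψ hψ (G.r e)
  rw [h, ENNReal.coe_zero, ENNReal.tsum_eq_zero] at h1
  simpa [h2] using h1 f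

lemma P_mul' (hψ : G.Harmonic F β ψ) [MeasurableSpace G.E] [MeasurableSingletonClass G.E]
    (e f : G.E) :
    ψ (G.r e) * P G F β ψ e {f} = if G.s f = G.r e then c G F β f * ψ (G.r f) else 0 := by
  by_cases h : ψ (G.r e) = 0
  · split_ifs with h2
    · rw [psi_zero G F β ψ hψ e f h h2, h]; simp
    · rw [h]; simp
  · exact P_mul G F β ψ e f h

/-- the measure on all sequences -/
lemma seq_exists (hψ : G.Harmonic F β ψ) [MeasurableSpace G.E] [DiscreteMeasurableSpace G.E] :
    ∃ M : Measure (ℕ → G.E), ∀ n p, M (cyl n p) =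
      if ∀ i < n, G.r (p i) = G.s (p (i + 1)) then
        (∏ i ∈ Finset.range (n + 1), c G F β (p i)) * ψ (G.r (p n)) else 0 := by
  obtain ⟨M, h0, h1⟩ := markov_exists (P G F β ψ) (P_prob G F β ψ hψ)
    (fun e => c G F β e * ψ (G.r e))
  refine ⟨M, fun n p => ?_⟩
  induction n with
  | zero => simp [h0]
  | succ n ih =>
    rw [h1, ih]
    by_cases ha : ∀ i < n, G.r (p i) = G.s (p (i + 1))
    · rw [if_pos ha, mul_assoc, P_mul' G F β ψ hψ]
      by_cases hb : G.s (p (n + 1)) = G.r (p n)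
      · rw [if_pos hb, if_pos, Finset.prod_range_succ _ (n + 1), mul_assoc]
        intro i hi
        rcases Nat.lt_or_ge i n with h | h
        · exact ha i h
        · obtain rfl : i = n := by omega
          exact hb.symm
      · rw [if_neg hb, if_neg, mul_zero]
        intro h
        exact hb (h n (by omega)).symm
    · rw [if_neg ha, if_neg, zero_mul]
      intro h
      exact ha fun i hi => h i (by omega)

/-- cylinder in path space around a path -/
def cylN (n : ℕ) (p : G.PathSpace) : Set G.PathSpace := {q | ∀ i ≤ n, q.1 i = p.1 i}

/-- initial segment -/
def ini (n : ℕ) (p : ℕ → G.E) : List G.E := List.ofFn fun i : Fin (n + 1) => p i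

lemma cylP_ini (n : ℕ) (p : G.PathSpace) : G.cylP (ini G n p.1) = cylN G n p := by
  ext q
  simp only [DirGraph.cylP, cylN, ini, Set.mem_ofPred_eq, List.length_ofFn, List.get_ofFn]
  constructor
  · intro h i hi
    exact h i (by omega)
  · intro h i hi
    exact h i (by omega)

lemma ini_path (n : ℕ) (p : G.PathSpace) : G.IsPath (ini G n p.1) := by
  unfold DirGraph.IsPath ini
  show List.IsChain _ _
  rw [List.isChain_iff_getElem]
  intro i hi
  rw [List.getElem_ofFn, List.getElem_ofFn]
  exact p.2 i

lemma ini_ne (n : ℕ) (p : ℕ → G.E) : ini G n p ≠ [] := by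
  simp [ini]

lemma coord_meas (i : ℕ) (T : Set G.E) : MeasurableSet {q : G.PathSpace | q.1 i ∈ T} := by
  letI : MeasurableSpace G.E := ⊤
  have h1 : Measurable (fun q : {p : ℕ → G.E // ∀ i : ℕ, G.r (p i) = G.s (p (i + 1))} => q.1 i) :=
    (measurable_pi_apply i).comp measurable_subtype_coe
  exact h1 (show MeasurableSet T from trivial)

lemma cylP_meas (μ : List G.E) : MeasurableSet (G.cylP μ) := by
  have : G.cylP μ = ⋂ (i : ℕ) (h : i < μ.length), {q : G.PathSpace | q.1 i ∈ ({μ.get ⟨i, h⟩} : Set G.E)} := by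
    ext q
    simp [DirGraph.cylP]
  rw [this]
  exact MeasurableSet.iInter fun i => MeasurableSet.iInter fun h => coord_meas G i _

/-- the pi-system of cylinders -/
def CC : Set (Set G.PathSpace) := {S | ∃ n p, S = cylN G n p}

lemma CC_countable : (CC G).Countable := by
  refine (Set.countable_range (G.cylP)).mono ?_
  rintro _ ⟨n, p, rfl⟩
  exact ⟨_, cylP_ini G n p⟩

lemma CC_pi : IsPiSystem (CC G) := by
  rintro _ ⟨n, p, rfl⟩ _ ⟨m, p', rfl⟩ ⟨q, hq, hq'⟩
  refine ⟨max n m, q, ?_⟩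
  ext x
  constructor
  · rintro ⟨h, h'⟩ i hi
    rcases le_max_iff.1 hi with h1 | h1
    · rw [h i h1, hq i h1]
    · rw [h' i h1, hq' i h1]
  · intro h
    refine ⟨fun i hi => ?_, fun i hi => ?_⟩
    · rw [h i (le_max_of_le_left hi), hq i hi]
    · rw [h i (le_max_of_le_right hi), hq' i hi]

lemma CC_gen : (inferInstance : MeasurableSpace G.PathSpace) = MeasurableSpace.generateFrom (CC G) := by
  apply le_antisymm
  · letI : MeasurableSpace G.E := ⊤
    have h1 : @Measurable G.PathSpace (ℕ → G.E) (MeasurableSpace.generateFrom (CC G)) _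
        (fun q => q.1) := by
      refine @measurable_pi_lambda _ _ _ (MeasurableSpace.generateFrom (CC G)) _ _ fun i => ?_
      intro T _
      have : (fun q : G.PathSpace => q.1 i) ⁻¹' T =
          ⋃₀ {S | S ∈ CC G ∧ S ⊆ (fun q : G.PathSpace => q.1 i) ⁻¹' T} := by
        ext q
        constructor
        · intro hq
          refine ⟨cylN G i q, ⟨⟨i, q, rfl⟩, ?_⟩, fun _ _ => rfl⟩
          intro x hx
          have := hx i le_rfl
          simpa [this] using hq
        · rintro ⟨S, ⟨_, hS⟩, hq⟩
          exact hS hq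
      rw [this]
      refine @MeasurableSet.sUnion _ (MeasurableSpace.generateFrom (CC G)) _
        ((CC_countable G).mono fun S h => h.1) fun S h =>
          MeasurableSpace.measurableSet_generateFrom h.1
    exact measurable_iff_comap_le.1 h1
  · apply MeasurableSpace.generateFrom_le
    rintro _ ⟨n, p, rfl⟩
    rw [← cylP_ini]
    exact cylP_meas G _

/-- the property in the theorem -/
def Good (m : Measure G.PathSpace) : Prop :=
  ∀ μ : List G.E, G.IsPath μ → μ ≠ [] → ∀ w : G.V, (∀ e ∈ μ.getLast?, G.r e = w) →
        m (G.cylP μ) = ENNReal.ofReal (Real.exp (-β * G.Fsum F μ)) * ψ w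

lemma unique (m m' : Measure G.PathSpace) (h : Good G F β ψ m) (h' : Good G F β ψ m') :
    m = m' := by
  have key : ∀ n p, ∃ w, ∀ m, Good G F β ψ m → m (cylN G n p) =
      ENNReal.ofReal (Real.exp (-β * G.Fsum F (ini G n p.1))) * ψ w := by
    intro n p
    refine ⟨G.r ((ini G n p.1).getLast (ini_ne G n p.1)), fun m hm => ?_⟩
    rw [← cylP_ini]
    refine hm _ (ini_path G n p) (ini_ne G n p.1) _ ?_
    intro e he
    rw [List.getLast?_eq_some_getLast (ini_ne G n p.1)] at he
    simp at he
    rw [he]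
  refine Measure.ext_of_generateFrom_of_cover_subset (CC_gen G) (CC_pi G) subset_rfl
    (CC_countable G) ?_ ?_ ?_
  · refine Set.eq_univ_of_forall fun q => ⟨cylN G 0 q, ⟨0, q, rfl⟩, fun _ _ => rfl⟩
  · rintro _ ⟨n, p, rfl⟩
    obtain ⟨w, hw⟩ := key n p
    rw [hw m h]
    exact ENNReal.mul_ne_top ENNReal.ofReal_ne_top ENNReal.coe_ne_top
  · rintro _ ⟨n, p, rfl⟩
    obtain ⟨w, hw⟩ := key n p
    rw [hw m h, hw m' h']

lemma prod_c (l : List G.E) :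
    (l.map (c G F β)).prod = ENNReal.ofReal (Real.exp (-β * G.Fsum F l)) := by
  unfold DirGraph.Fsum
  induction l with
  | nil => simp
  | cons a l ih =>
    simp only [List.map_cons, List.prod_cons, List.sum_cons, ih, c]
    rw [← ENNReal.ofReal_mul (Real.exp_pos _).le, ← Real.exp_add]
    congr 2
    ring

lemma exists_good (hψ : G.Harmonic F β ψ) : ∃ m, Good G F β ψ m := by
  letI : MeasurableSpace G.E := ⊤
  haveI : DiscreteMeasurableSpace G.E := ⟨fun _ => trivial⟩
  obtain ⟨M, hM⟩ := seq_exists G F β ψ hψ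
  let R : Set (ℕ → G.E) := {p | ∀ i : ℕ, G.r (p i) = G.s (p (i + 1))}
  have hR : MeasurableSet R := by
    have : R = ⋂ i : ℕ, {p | G.r (p i) = G.s (p (i + 1))} := by ext; simp [R]
    rw [this]
    refine MeasurableSet.iInter fun i => ?_
    have h1 : Measurable fun p : ℕ → G.E => (p i, p (i + 1)) := by fun_prop
    exact h1 (t := {x | G.r x.1 = G.s x.2})
      ((Set.to_countable _).measurableSet)
  have hM0 : M Rᶜ = 0 := by
    have hsub : Rᶜ ⊆ ⋃ (i : ℕ) (y : (j : Finset.Iic (i + 1)) → G.E),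
        ({p | G.r (p i) ≠ G.s (p (i + 1))} ∩ frestrictLe (π := fun _ => G.E) (i + 1) ⁻¹' {y}) := by
      intro p hp
      obtain ⟨i, hi⟩ := not_forall.1 hp
      simp only [Set.mem_iUnion]
      exact ⟨i, frestrictLe (π := fun _ => G.E) (i + 1) p, hi, rfl⟩
    refine measure_mono_null hsub (measure_iUnion_null fun i => measure_iUnion_null fun y => ?_)
    rcases Set.eq_empty_or_nonempty ({p | G.r (p i) ≠ G.s (p (i + 1))} ∩
      frestrictLe (π := fun _ => G.E) (i + 1) ⁻¹' {y}) with h | ⟨p, hp, hy⟩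
    · rw [h]; simp
    · refine measure_mono_null (t := cyl (i + 1) p) ?_ ?_
      · rintro q ⟨_, hq⟩
        rw [cyl_eq]
        exact Eq.trans hq (Eq.symm hy)
      · rw [hM, if_neg]
        intro h
        exact hp (h i (by omega))
  obtain ⟨m, hm⟩ : ∃ m : Measure G.PathSpace, ∀ S : Set G.PathSpace, m S = M (Subtype.val '' S) :=
    ⟨(M.comap Subtype.val : Measure {p : ℕ → G.E // p ∈ R}), fun S =>
      (MeasurableEmbedding.subtype_coe hR).comap_apply M S⟩
  refine ⟨m, ?_⟩
  intro μ hμ hne w hw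
  rw [hm]
  have hlen : 0 < μ.length := List.length_pos_iff.2 hne
  let p : ℕ → G.E := fun i => μ.getD i (μ.head hne)
  have hp : ∀ i (h : i < μ.length), p i = μ[i] := fun i h => by simp [p, h]
  have h1 : (Subtype.val '' G.cylP μ : Set (ℕ → G.E)) = cyl (μ.length - 1) p ∩ R := by
    ext x
    constructor
    · rintro ⟨q, hq, rfl⟩
      refine ⟨fun i hi => ?_, q.2⟩
      have hi' : i < μ.length := by omega
      rw [hq i hi', hp i hi']
      rfl
    · rintro ⟨hx, hx'⟩
      refine ⟨⟨x, hx'⟩, fun i hi => ?_, rfl⟩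
      have := hx i (by omega)
      rw [hp i hi] at this
      exact this
  rw [h1, measure_inter_conull hM0, hM, if_pos]
  · rw [← prod_c, show μ.length - 1 + 1 = μ.length by omega]
    congr 1
    · rw [Finset.prod_range, ← List.prod_ofFn]
      congr 1
      apply List.ext_getElem
      · simp
      · intro i h1 h2
        have : i < μ.length := by simpa using h2
        simp [hp i this]
    · rw [hp _ (by omega), ← List.getLast_eq_getElem hne,
        hw _ (by rw [List.getLast?_eq_some_getLast hne]; rfl)]
  · intro i hi
    have := List.isChain_iff_getElem.1 hμ i (by omega)
    rw [hp i (by omega), hp (i + 1) (by omega), this]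

lemma good_cylV (hψ : G.Harmonic F β ψ) (m : Measure G.PathSpace) (h : Good G F β ψ m) (v : G.V) :
    m (G.cylV v) = ψ v := by
  have h1 : G.cylV v = ⋃ e : {e : G.E | G.s e = v}, G.cylP [e.1] := by
    ext q
    simp [DirGraph.cylV, DirGraph.cylP]
  rw [h1, measure_iUnion _ (fun e => cylP_meas G _), ← harm G F β ψ hψ v]
  · have h2 : ∀ e, m (G.cylP [e]) = c G F β e * ψ (G.r e) := by
      intro e
      rw [h [e] (by simp [DirGraph.IsPath, List.Chain']) (by simp) (G.r e) (by simp), ← prod_c]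
      simp
    simp_rw [h2]
    rw [tsum_subtype {e : G.E | G.s e = v} (fun e => c G F β e * ψ (G.r e))]
    refine tsum_congr fun e => ?_
    simp [Set.indicator]
  · intro e f hef
    refine Set.disjoint_left.2 fun q hq hq' => hef ?_
    have a := hq 0 (by simp)
    have b := hq' 0 (by simp)
    exact Subtype.ext (a.symm.trans b)

end PathMeasureAux

/-- an `A(β)`-harmonic vector gives rise to a unique Borel measure on
the infinite path space with the prescribed values on cylinder sets. -/
theorem stmt_9 (G : DirGraph) (F : G.E → ℝ) (β : ℝ) (ψ : G.V → ℝ≥0)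
    (hψ : G.Harmonic F β ψ) :
    ∃! m : MeasureTheory.Measure G.PathSpace,
      (∀ μ : List G.E, G.IsPath μ → μ ≠ [] → ∀ w : G.V, (∀ e ∈ μ.getLast?, G.r e = w) →
        m (G.cylP μ) = ENNReal.ofReal (Real.exp (-β * G.Fsum F μ)) * ψ w) ∧
      (∀ v : G.V, m (G.cylV v) = ψ v) := by
  obtain ⟨m, hm⟩ := PathMeasureAux.exists_good G F β ψ hψ
  exact ⟨m, ⟨hm, PathMeasureAux.good_cylV G F β ψ hψ m hm⟩,
    fun m' hm' => PathMeasureAux.unique G F β ψ m' m hm'.1 hm⟩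
end

section
/- Let G be a strongly connected countable directed graph, F : E → ℝ a function and β ∈ ℝ such that A(β) is transient. Let m be a Borel measure on P(G) such that m(Z′(v)) < ∞ for every vertex v and m(Z′(μ)) = e^{−βF(μ)} m(Z′(r(μ))) for every finite path μ. Then m is dissipative, i.e. m(P(G) ∖ P(G)_wan) = 0. -/
open scoped ENNReal NNReal Classical
open Filter MeasureTheory

namespace DirGraph

/-- summability moves forward along an edge -/
theorem aux_edge (G : DirGraph) (F : G.E → ℝ) (β : ℝ) (v : G.V) (e : G.E)
    (h : ∑' n : ℕ, G.Apow F β n (G.s e) v ≠ ⊤) : ∑' n : ℕ, G.Apow F β n (G.r e) v ≠ ⊤ := by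
  intro htop
  apply h
  have h1 : ENNReal.ofReal (Real.exp (-β * F e)) ≤ G.Amat F β (G.s e) (G.r e) := by
    unfold Amat
    exact ENNReal.le_tsum (f := fun e' : {e' : G.E // G.s e' = G.s e ∧ G.r e' = G.r e} =>
      ENNReal.ofReal (Real.exp (-β * F e'.1))) ⟨e, rfl, rfl⟩
  have h2 : ∀ n, ENNReal.ofReal (Real.exp (-β * F e)) * G.Apow F β n (G.r e) v
      ≤ G.Apow F β (n + 1) (G.s e) v := by
    intro n
    refine (mul_le_mul_left h1 _).trans ?_
    exact ENNReal.le_tsum (f := fun x => G.Amat F β (G.s e) x * G.Apow F β n x v) (G.r e)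
  have h3 : ∑' n : ℕ, ENNReal.ofReal (Real.exp (-β * F e)) * G.Apow F β n (G.r e) v
      ≤ ∑' n : ℕ, G.Apow F β n (G.s e) v :=
    (ENNReal.tsum_le_tsum h2).trans
      (ENNReal.tsum_comp_le_tsum_of_injective (add_left_injective 1)
        (fun n => G.Apow F β n (G.s e) v))
  rw [ENNReal.tsum_mul_left, htop, ENNReal.mul_top] at h3
  · exact top_le_iff.1 h3
  · simp [Real.exp_pos]

theorem aux_path (G : DirGraph) (F : G.E → ℝ) (β : ℝ) (v w : G.V) (μ : List G.E) :
    ∀ u, G.IsPathFrom μ u w → ∑' n : ℕ, G.Apow F β n u v ≠ ⊤ →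
    ∑' n : ℕ, G.Apow F β n w v ≠ ⊤ := by
  induction μ with
  | nil =>
    intro u h hu
    rw [← h.2.2.2 rfl]; exact hu
  | cons e l ih =>
    rintro u ⟨hp, hh, hl, -⟩ hu
    have hs : G.s e = u := hh e (by simp)
    subst hs
    apply ih (G.r e) _ (aux_edge G F β v e hu)
    unfold IsPath at hp
    have hp' := List.isChain_cons.1 hp
    refine ⟨hp'.2, fun f hf => (hp'.1 f hf).symm, ?_, ?_⟩
    · intro f hf
      apply hl
      cases l with
      | nil => simp at hf
      | cons a b => simpa [List.getLast?_cons_cons] using hf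
    · rintro rfl
      exact hl e (by simp)

theorem aux_meas (G : DirGraph) (F : G.E → ℝ) (β : ℝ) (m : MeasureTheory.Measure G.PathSpace)
    (hconf : ∀ μ : List G.E, G.IsPath μ → μ ≠ [] → ∀ w : G.V, (∀ e ∈ μ.getLast?, G.r e = w) →
      m (G.cylP μ) = ENNReal.ofReal (Real.exp (-β * G.Fsum F μ)) * m (G.cylV w)) (v : G.V)
    (n : ℕ) : ∀ (μ : List G.E) (u : G.V), G.IsPath μ → (∀ e ∈ μ.getLast?, G.r e = u) →
    m (G.cylP μ ∩ {p | G.s (p.1 μ.length) = u} ∩ {p | G.s (p.1 (μ.length + n)) = v}) ≤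
      ENNReal.ofReal (Real.exp (-β * G.Fsum F μ)) * (G.Apow F β n u v * m (G.cylV v)) := by
  induction n with
  | zero =>
    intro μ u hp hl
    by_cases huv : u = v
    · subst huv
      by_cases hμ : μ = []
      · subst hμ
        simp only [Apow, Fsum]
        simp only [if_true, List.map_nil, List.sum_nil, mul_zero, Real.exp_zero,
          ENNReal.ofReal_one, one_mul]
        apply measure_mono
        intro p hp
        exact hp.2
      · simp only [Apow, if_true, one_mul]
        rw [← hconf μ hp hμ u hl]
        exact measure_mono (fun p hp => hp.1.1)
    · have : (G.cylP μ ∩ {p | G.s (p.1 μ.length) = u} ∩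
          {p | G.s (p.1 (μ.length + 0)) = v}) = ∅ := by
        ext p
        simp only [Set.mem_inter_iff, Set.mem_setOf_eq, Set.mem_empty_iff_false, iff_false]
        rintro ⟨⟨-, h1⟩, h2⟩
        exact huv (h1.symm.trans h2)
      rw [this]; simp
  | succ n ih =>
    intro μ u hp hl
    have hsub : (G.cylP μ ∩ {p | G.s (p.1 μ.length) = u} ∩
          {p | G.s (p.1 (μ.length + (n + 1))) = v}) ⊆
        ⋃ x : G.V, ⋃ e : {e : G.E // G.s e = u ∧ G.r e = x},
          (G.cylP (μ ++ [e.1]) ∩ {p | G.s (p.1 (μ ++ [e.1]).length) = x} ∩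
          {p | G.s (p.1 ((μ ++ [e.1]).length + n)) = v}) := by
      rintro p ⟨⟨h1, h2⟩, h3⟩
      simp only [Set.mem_iUnion]
      refine ⟨G.r (p.1 μ.length), ⟨p.1 μ.length, h2, rfl⟩, ⟨?_, ?_⟩, ?_⟩
      · intro i hi
        simp only [List.length_append, List.length_singleton] at hi
        by_cases h : i < μ.length
        · have := h1 i h
          simp only [List.get_eq_getElem] at this ⊢
          rw [this, List.getElem_append_left h]
        · have : i = μ.length := by omega
          subst this
          simp
      · simp only [Set.mem_setOf_eq, List.length_append, List.length_singleton]
        exact (p.2 _).symm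
      · simp only [Set.mem_setOf_eq, List.length_append, List.length_singleton] at h3 ⊢
        rw [← h3, add_assoc, add_comm 1 n]
    refine (measure_mono hsub).trans ((measure_iUnion_le _).trans ?_)
    simp only [Apow]
    rw [← ENNReal.tsum_mul_right, ← ENNReal.tsum_mul_left]
    refine ENNReal.tsum_le_tsum fun x => (measure_iUnion_le _).trans ?_
    unfold Amat
    rw [← ENNReal.tsum_mul_right, ← ENNReal.tsum_mul_right, ← ENNReal.tsum_mul_left]
    refine ENNReal.tsum_le_tsum fun e => ?_
    refine (ih (μ ++ [e.1]) x ?_ ?_).trans (le_of_eq ?_)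
    · unfold IsPath at hp ⊢
      refine List.isChain_append.2 ⟨hp, by simp, ?_⟩
      intro a ha b hb
      simp only [List.head?_cons, Option.mem_def, Option.some.injEq] at hb
      subst hb
      rw [hl a ha, e.2.1]
    · intro f hf
      simp only [List.getLast?_append, List.getLast?_singleton, Option.some_or, Option.mem_def, Option.some.injEq] at hf
      subst hf
      exact e.2.2
    · have : G.Fsum F (μ ++ [e.1]) = G.Fsum F μ + F e.1 := by simp [Fsum]
      rw [this, mul_add, Real.exp_add, ENNReal.ofReal_mul (Real.exp_pos _).le]
      ring

end DirGraph

/-- when `A(β)` is transient, every conformal measure on the path space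
is dissipative. -/
theorem stmt_10 (G : DirGraph) (hSC : G.StronglyConnected) (F : G.E → ℝ) (β : ℝ)
    (hT : G.Transient F β) (m : MeasureTheory.Measure G.PathSpace)
    (hfin : ∀ v : G.V, m (G.cylV v) ≠ ⊤)
    (hconf : ∀ μ : List G.E, G.IsPath μ → μ ≠ [] → ∀ w : G.V, (∀ e ∈ μ.getLast?, G.r e = w) →
      m (G.cylP μ) = ENNReal.ofReal (Real.exp (-β * G.Fsum F μ)) * m (G.cylV w)) :
    m (Set.univ \ G.wanSet) = 0 := by
  have key : ∀ u v : G.V, m {p | ∃ᶠ n in atTop, p ∈ G.cylV u ∩ {p | G.s (p.1 n) = v}} = 0 := by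
    intro u v
    apply measure_setOf_frequently_eq_zero
    obtain ⟨μ, hμ⟩ := hSC v u
    have hs := G.aux_path F β v u μ v hμ (hT v)
    have hle : ∀ n, m (G.cylV u ∩ {p | G.s (p.1 n) = v}) ≤
        G.Apow F β n u v * m (G.cylV v) := by
      intro n
      have h := G.aux_meas F β m hconf v n [] u List.isChain_nil (by simp)
      simp only [DirGraph.Fsum, List.map_nil, List.sum_nil, mul_zero, Real.exp_zero,
          ENNReal.ofReal_one, one_mul, List.length_nil, zero_add] at h
      refine le_trans (measure_mono ?_) h
      rintro p ⟨h1, h2⟩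
      exact ⟨⟨fun i hi => by simp at hi, h1⟩, h2⟩
    refine ne_top_of_le_ne_top ?_ (ENNReal.tsum_le_tsum hle)
    rw [ENNReal.tsum_mul_right]
    exact ENNReal.mul_ne_top hs (hfin v)
  refine measure_mono_null ?_ (measure_iUnion_null fun u => measure_iUnion_null fun v => key u v)
  rintro p ⟨-, hp⟩
  simp only [DirGraph.wanSet, Set.mem_setOf_eq, not_forall] at hp
  obtain ⟨v, hv⟩ := hp
  simp only [Set.mem_iUnion]
  refine ⟨G.s (p.1 0), v, ?_⟩
  have := Nat.frequently_atTop_iff_infinite.2 hv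
  exact this.mono fun n hn => ⟨rfl, hn⟩
end

section
/- Let G be a countable directed graph, F : E → ℝ a function, β ∈ ℝ, v a vertex and t > 0 a real number. Then, as an identity in [0,∞], Σ_{k≥0} (Σ_{j≥1} l^j_{vv}(β) t^j)^k = Σ_{n≥0} A(β)ⁿ_{vv} tⁿ. -/
open scoped ENNReal NNReal Classical
open Filter MeasureTheory

namespace DirGraph

/-- weight of an edge -/
noncomputable def wE (G : DirGraph) (F : G.E → ℝ) (β : ℝ) (e : G.E) : ℝ≥0∞ :=
  ENNReal.ofReal (Real.exp (-β * F e))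

/-- weight of a path -/
noncomputable def wP (G : DirGraph) (F : G.E → ℝ) (β : ℝ) (l : List G.E) : ℝ≥0∞ :=
  ENNReal.ofReal (Real.exp (-β * G.Fsum F l))

theorem wP_nil (G : DirGraph) (F : G.E → ℝ) (β : ℝ) : G.wP F β [] = 1 := by
  simp [wP, Fsum]

theorem wP_cons (G : DirGraph) (F : G.E → ℝ) (β : ℝ) (e : G.E) (l : List G.E) :
    G.wP F β (e :: l) = G.wE F β e * G.wP F β l := by
  simp only [wP, wE, Fsum, List.map_cons, List.sum_cons, mul_add, Real.exp_add]
  rw [ENNReal.ofReal_mul (Real.exp_pos _).le]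

/-- first passage paths to `v`, recursively -/
def FPath (G : DirGraph) (v : G.V) : G.V → List G.E → Prop
  | _, [] => False
  | u, e :: l => G.s e = u ∧ ((l = [] ∧ G.r e = v) ∨ (G.r e ≠ v ∧ FPath G v (G.r e) l))

theorem fPath_iff (G : DirGraph) (v : G.V) (l : List G.E) : ∀ u : G.V,
    (l ≠ [] ∧ G.IsPathFrom l u v ∧
      ∀ (i : ℕ) (h : i + 1 < l.length), G.r (l.get ⟨i, Nat.lt_of_succ_lt h⟩) ≠ v)
      ↔ G.FPath v u l := by
  induction l with
  | nil => intro u; simp [FPath]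
  | cons e l ih =>
    intro u
    cases l with
    | nil => simp [FPath, IsPathFrom, IsPath, List.Chain']
    | cons f m =>
      rw [FPath, ← ih]
      simp only [IsPathFrom, IsPath, List.Chain', List.isChain_cons_cons, List.head?_cons,
        List.getLast?_cons_cons, Option.mem_some_iff, forall_eq']
      constructor
      · rintro ⟨-, ⟨⟨h1, h2⟩, h3, h4, -⟩, h5⟩
        refine ⟨h3, Or.inr ⟨h5 0 (by simp), by simp, ⟨h2, h1.symm, h4, by simp⟩, ?_⟩⟩
        intro i hi
        exact h5 (i + 1) (by simpa using hi)
      · rintro ⟨h3, h | ⟨h6, -, ⟨h2, h1, h4, -⟩, h5⟩⟩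
        · simp at h
        · refine ⟨by simp, ⟨⟨h1.symm, h2⟩, h3, h4, by simp⟩, ?_⟩
          intro i hi
          cases i with
          | zero => exact h6
          | succ i => exact h5 i (by simpa using hi)

/-- first passage sums -/
noncomputable def fp (G : DirGraph) (F : G.E → ℝ) (β : ℝ) (v : G.V) (n : ℕ) (u : G.V) : ℝ≥0∞ :=
  ∑' l : List G.E, if l.length = n + 1 ∧ G.FPath v u l then G.wP F β l else 0

theorem loopSum_eq (G : DirGraph) (F : G.E → ℝ) (β : ℝ) (v : G.V) (n : ℕ) :
    G.loopSum F β v (n + 1) = G.fp F β v n v := by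
  unfold loopSum fp
  have := tsum_subtype {l : List G.E | l.length = n + 1 ∧ G.IsSimpleLoop v l} (G.wP F β)
  refine this.trans (tsum_congr fun l => ?_)
  simp only [Set.indicator, Set.mem_setOf_eq, IsSimpleLoop, fPath_iff]

theorem Amat_eq (G : DirGraph) (F : G.E → ℝ) (β : ℝ) (u x : G.V) :
    G.Amat F β u x = ∑' e : G.E, if G.s e = u ∧ G.r e = x then G.wE F β e else 0 := by
  have := tsum_subtype {e : G.E | G.s e = u ∧ G.r e = x} (G.wE F β)
  refine this.trans (tsum_congr fun l => ?_)
  simp only [Set.indicator, Set.mem_setOf_eq]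

theorem fp_cons (G : DirGraph) (F : G.E → ℝ) (β : ℝ) (v : G.V) (n : ℕ) (u : G.V) :
    G.fp F β v n u = ∑' e : G.E, ∑' l : List G.E,
      if l.length = n ∧ G.FPath v u (e :: l) then G.wE F β e * G.wP F β l else 0 := by
  unfold fp
  have hinj : Function.Injective (fun p : G.E × List G.E => p.1 :: p.2) := by
    rintro ⟨a, b⟩ ⟨c, d⟩ h
    simpa using h
  rw [← hinj.tsum_eq]
  · rw [ENNReal.tsum_prod']
    refine tsum_congr fun e => tsum_congr fun l => ?_
    simp [wP_cons]
  · intro l hl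
    cases l with
    | nil => simp at hl
    | cons e l => exact ⟨(e, l), rfl⟩

theorem fp_zero (G : DirGraph) (F : G.E → ℝ) (β : ℝ) (v : G.V) (u : G.V) :
    G.fp F β v 0 u = G.Amat F β u v := by
  rw [fp_cons, Amat_eq]
  refine tsum_congr fun e => ?_
  rw [tsum_eq_single []]
  · simp [FPath, wP_nil]
  · intro l hl
    simp [hl]

theorem fp_succ (G : DirGraph) (F : G.E → ℝ) (β : ℝ) (v : G.V) (n : ℕ) (u : G.V) :
    G.fp F β v (n + 1) u = ∑' x : G.V, if x = v then 0 else G.Amat F β u x * G.fp F β v n x := by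
  rw [fp_cons]
  have h1 : ∀ x : G.V, (if x = v then 0 else G.Amat F β u x * G.fp F β v n x)
      = ∑' e : G.E, if G.s e = u ∧ G.r e = x ∧ x ≠ v then G.wE F β e * G.fp F β v n x else 0 := by
    intro x
    by_cases hx : x = v
    · simp [hx]
    · rw [if_neg hx, Amat_eq, ← ENNReal.tsum_mul_right]
      refine tsum_congr fun e => ?_
      simp [hx, ite_mul]
  simp_rw [h1]
  conv_rhs => rw [ENNReal.tsum_comm]
  refine tsum_congr fun e => ?_
  rw [tsum_eq_single (G.r e)]
  · by_cases h : G.s e = u ∧ G.r e ≠ v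
    · rw [if_pos ⟨h.1, rfl, h.2⟩, fp, ← ENNReal.tsum_mul_left]
      refine tsum_congr fun l => ?_
      simp [FPath, h.1, h.2, mul_ite]
    · rw [if_neg (fun h' => h ⟨h'.1, h'.2.2⟩)]
      refine ENNReal.tsum_eq_zero.2 fun l => if_neg ?_
      rintro ⟨hl, h1, ⟨h2, -⟩ | h2⟩
      · simp [h2] at hl
      · exact h ⟨h1, h2.1⟩
  · intro x hx
    exact if_neg fun h => hx h.2.1.symm

theorem renewal (G : DirGraph) (F : G.E → ℝ) (β : ℝ) (v : G.V) (n : ℕ) : ∀ u : G.V,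
    G.Apow F β (n + 1) u v =
      ∑ p ∈ Finset.HasAntidiagonal.antidiagonal n, G.fp F β v p.1 u * G.Apow F β p.2 v v := by
  induction n with
  | zero =>
    intro u
    simp only [Finset.Nat.antidiagonal_zero, Finset.sum_singleton, fp_zero, Apow]
    rw [tsum_eq_single v]
    · simp
    · intro x hx
      simp [hx]
  | succ n ih =>
    intro u
    rw [Finset.Nat.sum_antidiagonal_succ, fp_zero, Apow,
      Summable.tsum_eq_add_tsum_ite' v ENNReal.summable]
    congr 1
    simp_rw [fp_succ, ← ENNReal.tsum_mul_right]
    rw [← Summable.tsum_finsetSum (fun _ _ => ENNReal.summable)]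
    refine tsum_congr fun x => ?_
    by_cases hx : x = v
    · simp [hx]
    · simp only [hx, if_false]
      rw [ih, Finset.mul_sum]
      refine Finset.sum_congr rfl fun p _ => ?_
      ring

end DirGraph

theorem cauchy_ennreal (f a : ℕ → ℝ≥0∞) :
    ∑' n, ∑ p ∈ Finset.HasAntidiagonal.antidiagonal n, f p.1 * a p.2 = (∑' n, f n) * ∑' n, a n := by
  rw [← ENNReal.tsum_mul_right]
  simp_rw [← ENNReal.tsum_mul_left]
  rw [← ENNReal.tsum_prod' (f := fun p : ℕ × ℕ => f p.1 * a p.2),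
    ← Finset.HasAntidiagonal.sigmaAntidiagonalEquivProd.tsum_eq, ENNReal.tsum_sigma']
  refine tsum_congr fun n => ?_
  rw [← Finset.tsum_subtype]
  rfl

theorem renewal_sum (f a : ℕ → ℝ≥0∞) (h0 : a 0 = 1)
    (h : ∀ n, a (n + 1) = ∑ p ∈ Finset.HasAntidiagonal.antidiagonal n, f p.1 * a p.2) :
    ∑' k : ℕ, (∑' j, f j) ^ k = ∑' n, a n := by
  have hM : ∑' n, a n = 1 + (∑' j, f j) * ∑' n, a n := by
    conv_lhs => rw [tsum_eq_zero_add' ENNReal.summable]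
    simp_rw [h, h0]
    rw [cauchy_ennreal]
  have geo : ∀ (L : ℝ≥0∞) (N : ℕ),
      ∑ k ∈ Finset.range (N + 1), L ^ k = 1 + L * ∑ k ∈ Finset.range N, L ^ k := by
    intro L N
    rw [Finset.sum_range_succ', Finset.mul_sum, pow_zero, add_comm]
    simp_rw [pow_succ']
  apply le_antisymm
  · rw [ENNReal.tsum_eq_iSup_nat]
    refine iSup_le fun N => ?_
    induction N with
    | zero => simp
    | succ N ih =>
      rw [geo, hM]
      gcongr
  · rw [ENNReal.tsum_eq_iSup_nat, ENNReal.tsum_eq_iSup_nat]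
    refine iSup_mono fun N => ?_
    induction N with
    | zero => simp
    | succ N ih =>
      rw [geo, Finset.sum_range_succ', h0, add_comm]
      gcongr 1 + ?_
      refine le_trans ?_ (mul_le_mul_right ih _)
      have e1 : ∑ j ∈ Finset.range N, a j = ∑' j, if j < N then a j else 0 := by
        rw [tsum_eq_sum (s := Finset.range N)]
        · refine Finset.sum_congr rfl fun j hj => ?_
          rw [if_pos (Finset.mem_range.1 hj)]
        · intro j hj
          exact if_neg (by simpa using hj)
      rw [e1, ← cauchy_ennreal]
      refine le_trans (le_of_eq ?_) (ENNReal.sum_le_tsum (Finset.range N))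
      refine Finset.sum_congr rfl fun n hn => ?_
      rw [h]
      refine Finset.sum_congr rfl fun p hp => ?_
      rw [if_pos]
      have := Finset.HasAntidiagonal.mem_antidiagonal.1 hp
      have := Finset.mem_range.1 hn
      omega

/-- the renewal identity relating simple loops and powers of `A(β)`. -/
theorem stmt_11 (G : DirGraph) (F : G.E → ℝ) (β : ℝ) (v : G.V) (t : ℝ) (ht : 0 < t) :
    ∑' k : ℕ, (∑' j : ℕ, G.loopSum F β v (j + 1) * ENNReal.ofReal t ^ (j + 1)) ^ k
      = ∑' n : ℕ, G.Apow F β n v v * ENNReal.ofReal t ^ n := by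
  refine renewal_sum (fun j => G.loopSum F β v (j + 1) * ENNReal.ofReal t ^ (j + 1))
    (fun n => G.Apow F β n v v * ENNReal.ofReal t ^ n) (by simp [DirGraph.Apow]) fun n => ?_
  simp only [DirGraph.renewal, DirGraph.loopSum_eq, Finset.sum_mul]
  refine Finset.sum_congr rfl fun p hp => ?_
  rw [← Finset.HasAntidiagonal.mem_antidiagonal.1 hp]
  ring
end

section
/- Let G be a strongly connected countable directed graph with finite Gurevich entropy h(G) which is recurrent and has a Ruette vertex v. Let G′ be the graph obtained from G by removing the unique edge e with s(e) = r(e) = v, and let A′ be the adjacency matrix of G′. Then limsup_n (1/n) log (A′)ⁿ_{vv} = h(G) and Σ_{n≥0} (A′)ⁿ_{vv} e^{−n h(G)} < ∞; that is, G′ is transient and h(G′) = h(G). -/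
open scoped ENNReal NNReal Classical
open Filter MeasureTheory

/-- The graph obtained from `G` by removing the edges which start and end at `v`. -/
def DirGraph.removeLoopsAt (G : DirGraph) (v : G.V) : DirGraph where
  V := G.V
  E := {e : G.E // ¬(G.s e = v ∧ G.r e = v)}
  countV := G.countV
  countE := letI := G.countE; inferInstance
  s := fun e => G.s e.1
  r := fun e => G.r e.1

namespace DirGraph

/-- number of paths of length `n+1` from `u` to `v` hitting `v` only at the end -/
noncomputable def fret (G : DirGraph) (v : G.V) : ℕ → G.V → ℝ≥0∞
  | 0, u => G.Amat (fun _ => 0) 0 u v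
  | n + 1, u => ∑' x : G.V, G.Amat (fun _ => 0) 0 u x * (if x = v then 0 else fret G v n x)

theorem Amat_weight (G : DirGraph) (h : ℝ) (u w : G.V) :
    G.Amat (fun _ => 1) h u w
      = ENNReal.ofReal (Real.exp (-h)) * G.Amat (fun _ => 0) 0 u w := by
  unfold Amat
  rw [← ENNReal.tsum_mul_left]
  simp

theorem Apow_weight (G : DirGraph) (h : ℝ) (n : ℕ) (u w : G.V) :
    G.Apow (fun _ => 1) h n u w
      = G.Apow (fun _ => 0) 0 n u w * ENNReal.ofReal (Real.exp (-h)) ^ n := by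
  induction n generalizing u with
  | zero => simp [Apow]
  | succ n ih =>
    simp only [Apow]
    rw [← ENNReal.tsum_mul_right]
    refine tsum_congr fun x => ?_
    rw [ih, Amat_weight]
    ring

theorem renewal_s15 (G : DirGraph) (v : G.V) (n : ℕ) (u : G.V) :
    G.Apow (fun _ => 0) 0 (n + 1) u v
      = ∑ k ∈ Finset.range (n + 1), G.fret v k u * G.Apow (fun _ => 0) 0 (n - k) v v := by
  induction n generalizing u with
  | zero =>
    simp only [Apow, fret, zero_add, Finset.range_one, Finset.sum_singleton]
    rw [tsum_eq_single v]
    · simp [Apow]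
    · intro b hb
      simp [hb]
  | succ n ih =>
    rw [Finset.sum_range_succ']
    simp only [fret, Nat.add_sub_add_right]
    have e1 : ∀ k, (∑' x : G.V, G.Amat (fun _ => 0) 0 u x * (if x = v then 0 else fret G v k x))
        * G.Apow (fun _ => 0) 0 (n - k) v v
        = ∑' x : G.V, G.Amat (fun _ => 0) 0 u x * (if x = v then 0 else fret G v k x)
        * G.Apow (fun _ => 0) 0 (n - k) v v := fun k => ENNReal.tsum_mul_right.symm
    simp only [e1]
    rw [← Summable.tsum_finsetSum (fun _ _ => ENNReal.summable)]
    have e2 : G.Amat (fun _ => 0) 0 u v * G.Apow (fun _ => 0) 0 (n + 1 - 0) v v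
        = ∑' x : G.V, if x = v then
          G.Amat (fun _ => 0) 0 u v * G.Apow (fun _ => 0) 0 (n + 1) v v else 0 := by
      rw [tsum_ite_eq]; simp
    rw [e2, ← ENNReal.tsum_add, Apow]
    refine tsum_congr fun x => ?_
    by_cases hx : x = v
    · subst hx; simp
    · simp only [hx, if_false, add_zero]
      rw [ih, Finset.mul_sum]
      refine Finset.sum_congr rfl fun k _ => ?_
      ring

/-- lists of edges forming first-hit paths -/
def FH (G : DirGraph) (v : G.V) (n : ℕ) (u : G.V) (μ : List G.E) : Prop :=
  μ.length = n + 1 ∧ G.IsPathFrom μ u v ∧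
  ∀ (i : ℕ) (h : i + 1 < μ.length), G.r (μ.get ⟨i, Nat.lt_of_succ_lt h⟩) ≠ v

theorem FH_zero (G : DirGraph) (v : G.V) (u : G.V) (μ : List G.E) (hμ : G.FH v 0 u μ) :
    ∃ e : G.E, μ = [e] ∧ G.s e = u ∧ G.r e = v := by
  obtain ⟨h1, ⟨h2, h3, h4, h5⟩, h6⟩ := hμ
  obtain ⟨e, rfl⟩ := List.length_eq_one_iff.1 h1
  exact ⟨e, rfl, h3 e (by simp), h4 e (by simp)⟩

theorem FH_succ (G : DirGraph) (v : G.V) (n : ℕ) (u : G.V) (μ : List G.E)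
    (hμ : G.FH v (n + 1) u μ) :
    ∃ (e : G.E) (ν : List G.E), μ = e :: ν ∧ G.s e = u ∧ G.r e ≠ v ∧ G.FH v n (G.r e) ν := by
  obtain ⟨h1, ⟨h2, h3, h4, h5⟩, h6⟩ := hμ
  match μ, h1, h2, h3, h4, h5, h6 with
  | e :: f :: ν, h1, h2, h3, h4, h5, h6 =>
    refine ⟨e, f :: ν, rfl, h3 e (by simp), h6 0 (by simp), by simpa using h1, ⟨?_, ?_, ?_, ?_⟩, ?_⟩
    · unfold IsPath at h2 ⊢
      exact (List.isChain_cons_cons.1 h2).2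
    · unfold IsPath at h2
      intro e' he'
      have := (List.isChain_cons_cons.1 h2).1
      simp at he'
      subst he'
      exact this.symm
    · intro e' he'
      exact h4 e' (by simpa using he')
    · simp
    · intro i hi
      exact h6 (i + 1) (by simpa using hi)

theorem FH_le (G : DirGraph) (v : G.V) (n : ℕ) (u : G.V) :
    ∑' _ : {μ : List G.E // G.FH v n u μ}, (1 : ℝ≥0∞) ≤ G.fret v n u := by
  induction n generalizing u with
  | zero =>
    simp only [fret, Amat, neg_zero, mul_zero, Real.exp_zero, ENNReal.ofReal_one]
    choose f hf using fun μ : {μ : List G.E // G.FH v 0 u μ} => FH_zero G v u μ.1 μ.2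
    let g : {μ : List G.E // G.FH v 0 u μ} → {e : G.E // G.s e = u ∧ G.r e = v} :=
      fun μ => ⟨f μ, (hf μ).2⟩
    have hg : Function.Injective g := by
      intro a b hab
      have : f a = f b := congrArg Subtype.val hab
      apply Subtype.ext
      rw [(hf a).1, (hf b).1, this]
    exact ENNReal.tsum_comp_le_tsum_of_injective hg (fun _ => 1)
  | succ n ih =>
    choose f k hf using fun μ : {μ : List G.E // G.FH v (n + 1) u μ} => FH_succ G v n u μ.1 μ.2
    let g : {μ : List G.E // G.FH v (n + 1) u μ} →
        (Σ x : G.V, Σ _ : {e : G.E // G.s e = u ∧ G.r e = x},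
          {μ : List G.E // x ≠ v ∧ G.FH v n x μ}) :=
      fun μ => ⟨G.r (f μ), ⟨f μ, (hf μ).2.1, rfl⟩, ⟨k μ, (hf μ).2.2⟩⟩
    have hg : Function.Injective g := by
      intro a b hab
      have h1 : f a = f b := congrArg (fun z => z.2.1.1) hab
      have h2 : k a = k b := congrArg (fun z => z.2.2.1) hab
      apply Subtype.ext
      rw [(hf a).1, (hf b).1, h1, h2]
    refine (ENNReal.tsum_comp_le_tsum_of_injective hg (fun _ => 1)).trans ?_
    rw [ENNReal.tsum_sigma', fret]
    refine ENNReal.tsum_le_tsum fun x => ?_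
    rw [ENNReal.tsum_sigma', Amat, ← ENNReal.tsum_mul_right]
    refine ENNReal.tsum_le_tsum fun e => ?_
    by_cases hx : x = v
    · have : IsEmpty {μ : List G.E // x ≠ v ∧ G.FH v n x μ} := ⟨fun z => z.2.1 hx⟩
      rw [tsum_empty]
      exact bot_le
    · simp only [hx, if_false, zero_mul, neg_zero, Real.exp_zero, ENNReal.ofReal_one, one_mul]
      refine le_trans ?_ (ih x)
      let g' : {μ : List G.E // x ≠ v ∧ G.FH v n x μ} → {μ : List G.E // G.FH v n x μ} :=
        fun z => ⟨z.1, z.2.2⟩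
      have hg' : Function.Injective g' := by
        intro a b hab
        exact Subtype.ext (congrArg (fun z => z.1) hab)
      exact ENNReal.tsum_comp_le_tsum_of_injective hg' (fun _ => 1)

theorem loopSum_le (G : DirGraph) (v : G.V) (n : ℕ) :
    G.loopSum (fun _ => 0) 0 v (n + 1) ≤ G.fret v n v := by
  refine le_trans ?_ (FH_le G v n v)
  unfold loopSum
  simp only [neg_zero, zero_mul, Real.exp_zero, ENNReal.ofReal_one]
  let g : {μ : List G.E // μ.length = n + 1 ∧ G.IsSimpleLoop v μ} → {μ : List G.E // G.FH v n v μ} :=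
    fun μ => ⟨μ.1, μ.2.1, μ.2.2.2⟩
  have hg : Function.Injective g := by
    intro a b hab
    exact Subtype.ext (congrArg (fun z => z.1) hab)
  exact ENNReal.tsum_comp_le_tsum_of_injective hg (fun _ => 1)

theorem Amat_remove_le (G : DirGraph) (v u w : G.V) :
    (G.removeLoopsAt v).Amat (fun _ => 0) 0 u w ≤ G.Amat (fun _ => 0) 0 u w := by
  unfold Amat
  simp only [neg_zero, mul_zero, Real.exp_zero, ENNReal.ofReal_one]
  let g : {e : (G.removeLoopsAt v).E // (G.removeLoopsAt v).s e = u ∧ (G.removeLoopsAt v).r e = w} →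
      {e : G.E // G.s e = u ∧ G.r e = w} := fun e => ⟨e.1.1, e.2⟩
  have hg : Function.Injective g := by
    intro a b hab
    exact Subtype.ext (Subtype.ext (congrArg (fun z => z.1) hab))
  exact ENNReal.tsum_comp_le_tsum_of_injective hg (fun _ => 1)

theorem Amat_remove_ge (G : DirGraph) (v u w : G.V) (huw : ¬ (u = v ∧ w = v)) :
    G.Amat (fun _ => 0) 0 u w ≤ (G.removeLoopsAt v).Amat (fun _ => 0) 0 u w := by
  unfold Amat
  simp only [neg_zero, mul_zero, Real.exp_zero, ENNReal.ofReal_one]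
  let g : {e : G.E // G.s e = u ∧ G.r e = w} →
    {e : (G.removeLoopsAt v).E // (G.removeLoopsAt v).s e = u ∧ (G.removeLoopsAt v).r e = w} :=
      fun e => ⟨⟨e.1, fun h => huw ⟨e.2.1.symm.trans h.1, e.2.2.symm.trans h.2⟩⟩, e.2⟩
  have hg : Function.Injective g := by
    intro a b hab
    exact Subtype.ext (congrArg (fun z => z.1.1) hab)
  exact ENNReal.tsum_comp_le_tsum_of_injective hg (fun _ => 1)

theorem Amat_remove_self (G : DirGraph) (v : G.V) :
    (G.removeLoopsAt v).Amat (fun _ => 0) 0 v v = 0 := by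
  unfold Amat
  have : IsEmpty {e : (G.removeLoopsAt v).E //
      (G.removeLoopsAt v).s e = v ∧ (G.removeLoopsAt v).r e = v} := ⟨fun e => e.1.2 e.2⟩
  exact tsum_empty

theorem Apow_remove_le (G : DirGraph) (v : G.V) (n : ℕ) (u w : G.V) :
    (G.removeLoopsAt v).Apow (fun _ => 0) 0 n u w ≤ G.Apow (fun _ => 0) 0 n u w := by
  induction n generalizing u with
  | zero => exact le_rfl
  | succ n ih =>
    exact ENNReal.tsum_le_tsum fun x => mul_le_mul' (Amat_remove_le G v u x) (ih x)

theorem fret_remove_le (G : DirGraph) (v : G.V) (n : ℕ) (u : G.V) :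
    (G.removeLoopsAt v).fret v n u ≤ G.fret v n u := by
  induction n generalizing u with
  | zero => exact Amat_remove_le G v u v
  | succ n ih =>
    refine ENNReal.tsum_le_tsum fun x => mul_le_mul' (Amat_remove_le G v u x) ?_
    by_cases hx : x = v
    · exact (if_pos hx).le.trans bot_le
    · exact (if_neg hx).le.trans ((ih x).trans (if_neg hx).ge)

theorem fret_remove_ge (G : DirGraph) (v : G.V) (n : ℕ) (u : G.V) (hu : u ≠ v ∨ n ≠ 0) :
    G.fret v n u ≤ (G.removeLoopsAt v).fret v n u := by
  induction n generalizing u with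
  | zero => exact Amat_remove_ge G v u v (by tauto)
  | succ n ih =>
    refine ENNReal.tsum_le_tsum fun x => ?_
    by_cases hx : x = v
    · rw [if_pos hx, mul_zero]
      exact bot_le
    · exact mul_le_mul' (Amat_remove_ge G v u x (by tauto))
        ((if_neg hx).le.trans ((ih x (Or.inl hx)).trans (if_neg hx).ge))

/-- generating function identity -/
theorem gen_eq (G : DirGraph) (v : G.V) (y : ℝ≥0∞) :
    ∑' n, G.Apow (fun _ => 0) 0 n v v * y ^ n
      = 1 + (∑' n, G.fret v n v * y ^ (n + 1)) * ∑' n, G.Apow (fun _ => 0) 0 n v v * y ^ n := by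
  conv_lhs => rw [tsum_eq_zero_add' ENNReal.summable]
  congr 1
  · simp [Apow]
  · rw [← ENNReal.tsum_mul_right]
    simp_rw [← ENNReal.tsum_mul_left]
    rw [← ENNReal.tsum_prod (f := fun i j => G.fret v i v * y ^ (i + 1) *
      (G.Apow (fun _ => 0) 0 j v v * y ^ j)),
      ← Finset.HasAntidiagonal.sigmaAntidiagonalEquivProd.tsum_eq, ENNReal.tsum_sigma']
    refine tsum_congr fun n => ?_
    rw [tsum_fintype, renewal_s15, Finset.sum_mul]
    simp only [Finset.HasAntidiagonal.sigmaAntidiagonalEquivProd_apply]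
    rw [Finset.sum_coe_sort (Finset.HasAntidiagonal.antidiagonal n) (fun p : ℕ × ℕ => G.fret v p.1 v * y ^ (p.1 + 1) *
      (G.Apow (fun _ => 0) 0 p.2 v v * y ^ p.2)),
      Finset.Nat.sum_antidiagonal_eq_sum_range_succ_mk]
    refine Finset.sum_congr rfl fun k hk => ?_
    obtain ⟨j, rfl⟩ := Nat.exists_eq_add_of_le (Nat.lt_succ_iff.1 (Finset.mem_range.1 hk))
    simp only [Nat.add_sub_cancel_left]
    ring

end DirGraph

theorem aux_limit (c : ℕ → ℝ≥0∞) (e : ℕ → ℕ) (x K : ℝ≥0∞) (h0 : x ≠ 0) (ht : x ≠ ⊤)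
    (H : ∀ y < x, ∑' n, c n * y ^ (e n) ≤ K) : ∑' n, c n * x ^ (e n) ≤ K := by
  refine ENNReal.tsum_le_of_sum_range_le fun N => ?_
  have hne : (nhdsWithin x (Set.Iio x)).NeBot := nhdsLT_neBot_of_exists_lt ⟨0, pos_iff_ne_zero.2 h0⟩
  have hT : Tendsto (fun y : ℝ≥0∞ => ∑ n ∈ Finset.range N, c n * y ^ (e n))
      (nhdsWithin x (Set.Iio x)) (nhds (∑ n ∈ Finset.range N, c n * x ^ (e n))) := by
    refine tendsto_finsetSum _ fun n _ => ?_
    refine ENNReal.Tendsto.const_mul ?_ (Or.inl (pow_ne_zero _ h0))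
    exact ((ENNReal.continuous_pow (e n)).tendsto x).mono_left nhdsWithin_le_nhds
  refine le_of_tendsto hT ?_
  filter_upwards [self_mem_nhdsWithin] with y hy
  exact (ENNReal.sum_le_tsum _).trans (H y hy)

theorem aux_root (a : ℕ → ℝ≥0∞) (X : ℝ≥0∞) (hfin : ∀ n, a n ≠ ⊤)
    (hl : limsup (fun n : ℕ => (a n) ^ ((n : ℝ)⁻¹)) atTop = X) (y : ℝ≥0∞) (hy : y < X⁻¹) :
    ∑' n, a n * y ^ n ≠ ⊤ := by
  obtain ⟨z, hyz, hzx⟩ := exists_between hy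
  have hz0 : z ≠ 0 := (pos_of_gt hyz).ne'
  have hzt : z ≠ ⊤ := (lt_of_lt_of_le hzx le_top).ne
  have hXz : X < z⁻¹ := by
    rw [← inv_inv X]; exact ENNReal.inv_lt_inv.2 hzx
  have hev := eventually_lt_of_limsup_lt (hl.trans_lt hXz)
  obtain ⟨N, hN⟩ := eventually_atTop.1 (hev.and (eventually_gt_atTop 0))
  rw [← Summable.sum_add_tsum_nat_add' (k := N) ENNReal.summable]
  refine ENNReal.add_ne_top.2 ⟨?_, ?_⟩
  · refine (ENNReal.sum_lt_top.2 fun n _ => ?_).ne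
    exact (ENNReal.mul_ne_top (hfin n) (ENNReal.pow_ne_top (hyz.trans_le le_top).ne)).lt_top
  · have hq : y / z < 1 := by
      rw [ENNReal.div_lt_iff (Or.inl hz0) (Or.inl hzt), one_mul]; exact hyz
    have hle : ∑' n, a (n + N) * y ^ (n + N) ≤ ∑' n, (y / z) ^ n := by
      refine ENNReal.tsum_le_tsum fun n => ?_
      obtain ⟨h1, h2⟩ := hN (n + N) (by omega)
      have h3 : a (n + N) ≤ (z⁻¹) ^ (n + N) := by
        have := ENNReal.rpow_le_rpow h1.le (Nat.cast_nonneg (α := ℝ) (n + N))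
        rwa [← ENNReal.rpow_mul, inv_mul_cancel₀ (by exact_mod_cast h2.ne'), ENNReal.rpow_one,
          ENNReal.rpow_natCast] at this
      calc a (n + N) * y ^ (n + N) ≤ (z⁻¹) ^ (n + N) * y ^ (n + N) := by gcongr
        _ = (y / z) ^ (n + N) := by rw [← mul_pow, mul_comm, ENNReal.div_eq_inv_mul, mul_comm]
        _ ≤ (y / z) ^ n := pow_le_pow_right_of_le_one' hq.le (by omega)
    refine ne_top_of_le_ne_top ?_ hle
    rw [ENNReal.tsum_geometric]
    exact ENNReal.inv_ne_top.2 (tsub_pos_of_lt hq).ne'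

/-- removing the loop edge at a Ruette vertex of a recurrent graph
yields a transient graph with the same Gurevich entropy. -/
theorem stmt_15 (G : DirGraph) (hSC : G.StronglyConnected) (h : ℝ)
    (hent : ∀ u : G.V,
      Filter.limsup (fun n : ℕ => (G.Apow (fun _ => 0) 0 n u u) ^ ((n : ℝ)⁻¹)) Filter.atTop
        = ENNReal.ofReal (Real.exp h))
    (hrec : G.Recurrent (fun _ => 1) h)
    (v : G.V)
    (hl1 : G.loopSum (fun _ => 0) 0 v 1 = 1)
    (hRuette : Filter.limsup
        (fun n : ℕ => (G.loopSum (fun _ => 0) 0 v n) ^ ((n : ℝ)⁻¹)) Filter.atTop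
      = ENNReal.ofReal (Real.exp h)) :
    (Filter.limsup
        (fun n : ℕ => ((G.removeLoopsAt v).Apow (fun _ => 0) 0 n v v) ^ ((n : ℝ)⁻¹))
        Filter.atTop = ENNReal.ofReal (Real.exp h)) ∧
    ∑' n : ℕ, (G.removeLoopsAt v).Apow (fun _ => 1) h n v v ≠ ⊤ := by
  have hA1 : 1 ≤ G.fret v 0 v := hl1 ▸ G.loopSum_le v 0
  have hmono : Monotone (fun n => G.Apow (fun _ => 0) 0 n v v) := by
    refine monotone_nat_of_le_succ fun n => ?_
    calc G.Apow (fun _ => 0) 0 n v v = 1 * G.Apow (fun _ => 0) 0 n v v := (one_mul _).symm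
      _ ≤ G.Amat (fun _ => 0) 0 v v * G.Apow (fun _ => 0) 0 n v v := by
        gcongr; exact hA1
      _ ≤ G.Apow (fun _ => 0) 0 (n + 1) v v :=
        ENNReal.le_tsum (f := fun x => G.Amat (fun _ => 0) 0 v x * G.Apow (fun _ => 0) 0 n x v) v
  have hfin : ∀ n, G.Apow (fun _ => 0) 0 n v v ≠ ⊤ := by
    intro n hn
    have h1 : limsup (fun n : ℕ => (G.Apow (fun _ => 0) 0 n v v) ^ ((n : ℝ)⁻¹)) atTop < ⊤ := by
      rw [hent v]; exact ENNReal.ofReal_lt_top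
    obtain ⟨m, hm, hm1, hm2⟩ := ((eventually_lt_of_limsup_lt h1).and
      ((eventually_ge_atTop n).and (eventually_gt_atTop 0))).exists
    have h2 : G.Apow (fun _ => 0) 0 m v v = ⊤ := top_le_iff.1 (hn ▸ hmono hm1)
    rw [h2, ENNReal.top_rpow_of_pos (by positivity)] at hm
    exact lt_irrefl _ hm
  set x := ENNReal.ofReal (Real.exp (-h)) with hx
  have hx0 : x ≠ 0 := by simp [hx, Real.exp_pos]
  have hxt : x ≠ ⊤ := ENNReal.ofReal_ne_top
  have hxinv : (ENNReal.ofReal (Real.exp h))⁻¹ = x := by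
    rw [hx, Real.exp_neg, ENNReal.ofReal_inv_of_pos (Real.exp_pos h)]
  have hAy : ∀ y < x, ∑' n, G.Apow (fun _ => 0) 0 n v v * y ^ n ≠ ⊤ := fun y hy =>
    aux_root _ _ hfin (hent v) y (hxinv ▸ hy)
  have hFy : ∀ y < x, ∑' n, G.fret v n v * y ^ (n + 1) ≤ 1 := by
    intro y hy
    by_contra! hlt
    have h1 := G.gen_eq v y
    have h2 : ∑' n, G.Apow (fun _ => 0) 0 n v v * y ^ n + 1
        ≤ ∑' n, G.Apow (fun _ => 0) 0 n v v * y ^ n := by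
      conv_rhs => rw [h1]
      rw [add_comm]
      gcongr
      exact le_mul_of_one_le_left' hlt.le
    exact absurd h2 (not_le.2 (ENNReal.lt_add_right (hAy y hy) one_ne_zero))
  have hFx : ∑' n, G.fret v n v * x ^ (n + 1) ≤ 1 :=
    aux_limit (fun n => G.fret v n v) (fun n => n + 1) x 1 hx0 hxt hFy
  let v' : (G.removeLoopsAt v).V := v
  have hF'x : ∑' n, (G.removeLoopsAt v).fret v n v * x ^ (n + 1) < 1 := by
    have h1 : ∑' n, (G.removeLoopsAt v).fret v n v * x ^ (n + 1) + x
        ≤ ∑' n, G.fret v n v * x ^ (n + 1) := by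
      rw [tsum_eq_zero_add' (f := fun n => G.fret v n v * x ^ (n + 1)) ENNReal.summable,
        tsum_eq_zero_add' (f := fun n => (G.removeLoopsAt v).fret v n v * x ^ (n + 1))
          ENNReal.summable, add_comm]
      have h0 : (G.removeLoopsAt v).fret v 0 v = 0 := G.Amat_remove_self v
      rw [h0, zero_mul, zero_add]
      refine add_le_add ?_ (ENNReal.tsum_le_tsum fun n => ?_)
      · rw [zero_add, pow_one]
        exact le_mul_of_one_le_left' hA1
      · gcongr
        exact G.fret_remove_le v (n + 1) v
    have h2 := h1.trans hFx
    refine lt_of_lt_of_le (ENNReal.lt_add_right ?_ hx0) h2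
    exact ne_top_of_le_ne_top ENNReal.one_ne_top (le_self_add.trans h2)
  refine ⟨le_antisymm ?_ ?_, ?_⟩
  · rw [← hent v]
    refine limsup_le_limsup (Eventually.of_forall fun n => ?_)
    exact ENNReal.rpow_le_rpow (G.Apow_remove_le v n v v) (by positivity)
  · rw [← hRuette]
    refine limsup_le_limsup ?_
    filter_upwards [eventually_ge_atTop 2] with n hn
    refine ENNReal.rpow_le_rpow ?_ (by positivity)
    obtain ⟨m, rfl⟩ := Nat.exists_eq_add_of_le' hn
    refine (G.loopSum_le v (m + 1)).trans ((G.fret_remove_ge v (m + 1) v (by simp)).trans ?_)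
    rw [(G.removeLoopsAt v).renewal_s15 v (m + 1) v]
    refine le_trans ?_ (Finset.single_le_sum (fun _ _ => bot_le)
      (Finset.mem_range.2 (Nat.lt_succ_self (m + 1))))
    have h0 : (G.removeLoopsAt v).Apow (fun _ => 0) 0 (m + 1 - (m + 1)) v' v' = 1 := by
      simp [DirGraph.Apow]
    exact (mul_one _).ge.trans (mul_le_mul' le_rfl h0.ge)
  · set K := ∑' n, (G.removeLoopsAt v).fret v n v * x ^ (n + 1) with hK
    have hmain : ∑' n, (G.removeLoopsAt v).Apow (fun _ => 0) 0 n v v * x ^ n ≤ (1 - K)⁻¹ := by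
      refine aux_limit (fun n => (G.removeLoopsAt v).Apow (fun _ => 0) 0 n v v) (fun n => n) x _
        hx0 hxt fun y hy => ?_
      have h1 := (G.removeLoopsAt v).gen_eq v y
      have hfinA : ∑' n, (G.removeLoopsAt v).Apow (fun _ => 0) 0 n v v * y ^ n ≠ ⊤ := by
        refine ne_top_of_le_ne_top (hAy y hy) (ENNReal.tsum_le_tsum fun n => ?_)
        gcongr
        exact G.Apow_remove_le v n v v
      have hKy : ∑' n, (G.removeLoopsAt v).fret v n v * y ^ (n + 1) ≤ K :=
        ENNReal.tsum_le_tsum fun n => by gcongr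
      set S := ∑' n, (G.removeLoopsAt v).Apow (fun _ => 0) 0 n v v * y ^ n with hS
      have h2 : S ≤ 1 + K * S := h1.le.trans (by gcongr)
      have hKS : K * S ≠ ⊤ := ENNReal.mul_ne_top (hF'x.trans_le le_top).ne hfinA
      rw [ENNReal.le_inv_iff_mul_le, mul_comm, ENNReal.sub_mul (fun _ _ => hfinA), one_mul]
      exact tsub_le_iff_right.2 h2
    refine ne_top_of_le_ne_top ?_ (le_trans (ENNReal.tsum_le_tsum fun n =>
      ((G.removeLoopsAt v).Apow_weight h n v v).le) hmain)
    exact ENNReal.inv_ne_top.2 (tsub_pos_of_lt hF'x).ne'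
end

section
/- Let 0 < r ≤ R be real numbers and let I be one of the intervals [r,R], ]r,R], [r,R[, ]r,R[, [r,∞[, ]r,∞[. Then there exist sequences a = (aᵢ)_{i≥1}, b = (bᵢ)_{i≥1}, c = (cᵢ)_{i≥1} of positive integers such that J(a,b,c) = I. -/
open scoped ENNReal NNReal Classical
open Filter MeasureTheory

/-- The set `J(a,b,c)` of inverse temperatures determined by three sequences of
positive integers (the sequences are indexed from 1). -/
def Jset (a b c : ℕ → ℕ) : Set ℝ :=
  {β : ℝ |
    Summable (fun k : ℕ =>
      (b (k + 1) : ℝ) / (∏ i ∈ Finset.range (k + 1), (a (i + 1) : ℝ)) *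
        Real.exp (-((k + 1 : ℕ) : ℝ) * β)) ∧
    Summable (fun k : ℕ =>
      (c (k + 1) : ℝ) / (∏ i ∈ Finset.range (k + 1), (a (i + 1) : ℝ)) *
        Real.exp (((k + 1 : ℕ) : ℝ) * β))}

lemma aux_ceil (x : ℕ → ℝ) (hx : ∀ k, 0 < x k) :
    ∃ n : ℕ → ℕ, (∀ i, 0 < n i) ∧ ∀ β : ℝ,
      (Summable (fun k : ℕ => (n (k + 1) : ℝ) / ((k + 1).factorial : ℝ) *
        Real.exp (((k + 1 : ℕ) : ℝ) * β)) ↔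
      Summable (fun k : ℕ => x (k + 1) * Real.exp (((k + 1 : ℕ) : ℝ) * β))) := by
  refine ⟨fun i => ⌈(i.factorial : ℝ) * x i⌉₊, fun i => Nat.ceil_pos.2
    (mul_pos (by exact_mod_cast i.factorial_pos) (hx i)), fun β => ?_⟩
  have hE : Summable (fun k : ℕ => 1 / ((k + 1).factorial : ℝ) *
      Real.exp (((k + 1 : ℕ) : ℝ) * β)) := by
    have h := (summable_nat_add_iff 1).2 (Real.summable_pow_div_factorial (Real.exp β))
    refine h.congr fun k => ?_
    rw [Real.exp_nat_mul]
    ring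
  constructor
  · intro h
    refine Summable.of_nonneg_of_le (fun k => by have := hx (k+1); positivity) (fun k => ?_) h
    have hf : (0 : ℝ) < ((k + 1).factorial : ℝ) := by exact_mod_cast (k+1).factorial_pos
    refine mul_le_mul_of_nonneg_right ?_ (Real.exp_pos _).le
    rw [le_div_iff₀ hf, mul_comm]
    exact Nat.le_ceil _
  · intro h
    refine Summable.of_nonneg_of_le (fun k => by positivity) (fun k => ?_) (h.add hE)
    have hf : (0 : ℝ) < ((k + 1).factorial : ℝ) := by exact_mod_cast (k+1).factorial_pos
    rw [← add_mul]
    refine mul_le_mul_of_nonneg_right ?_ (Real.exp_pos _).le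
    have h1 := (Nat.ceil_lt_add_one (mul_pos hf (hx (k+1))).le).le
    rw [div_le_iff₀ hf, add_mul, one_div, inv_mul_cancel₀ hf.ne', mul_comm (x (k+1))]
    exact h1

lemma aux_lt (s : ℝ) : ∃ n : ℕ → ℕ, (∀ i, 0 < n i) ∧ ∀ β : ℝ,
      (Summable (fun k : ℕ => (n (k + 1) : ℝ) / ((k + 1).factorial : ℝ) *
        Real.exp (((k + 1 : ℕ) : ℝ) * β)) ↔ β < s) := by
  obtain ⟨n, hn, h⟩ := aux_ceil (fun k => Real.exp ((k : ℝ) * (-s))) (fun k => Real.exp_pos _)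
  refine ⟨n, hn, fun β => (h β).trans ?_⟩
  have : (fun k : ℕ => Real.exp (((k + 1 : ℕ) : ℝ) * (-s)) * Real.exp (((k + 1 : ℕ) : ℝ) * β))
      = fun k : ℕ => (fun k : ℕ => Real.exp (β - s) ^ k) (k + 1) := by
    funext k
    rw [← Real.exp_add]
    show _ = Real.exp (β - s) ^ (k + 1)
    rw [← Real.exp_nat_mul]
    congr 1; ring
  rw [this, summable_nat_add_iff 1, summable_geometric_iff_norm_lt_one, Real.norm_eq_abs,
    Real.abs_exp, Real.exp_lt_one_iff]
  exact sub_neg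

lemma aux_le (s : ℝ) : ∃ n : ℕ → ℕ, (∀ i, 0 < n i) ∧ ∀ β : ℝ,
      (Summable (fun k : ℕ => (n (k + 1) : ℝ) / ((k + 1).factorial : ℝ) *
        Real.exp (((k + 1 : ℕ) : ℝ) * β)) ↔ β ≤ s) := by
  obtain ⟨n, hn, h⟩ := aux_ceil
    (fun k => Real.exp ((k : ℝ) * (-s)) * (if k = 0 then 1 else 1 / (k : ℝ) ^ 2)) (fun k => by
      refine mul_pos (Real.exp_pos _) ?_
      split_ifs
      · exact one_pos
      · positivity)
  refine ⟨n, hn, fun β => (h β).trans ?_⟩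
  have : (fun k : ℕ => (Real.exp (((k + 1 : ℕ) : ℝ) * (-s)) *
      (if k + 1 = 0 then 1 else 1 / ((k + 1 : ℕ) : ℝ) ^ 2)) * Real.exp (((k + 1 : ℕ) : ℝ) * β))
      = fun k : ℕ => 1 / ((k + 1 : ℕ) : ℝ) ^ 2 * Real.exp (((k + 1 : ℕ) : ℝ) * (β - s)) := by
    funext k
    rw [if_neg (Nat.succ_ne_zero k), mul_sub, sub_eq_add_neg, Real.exp_add, mul_neg]
    ring
  rw [this]
  constructor
  · intro hs
    by_contra! hlt
    have ht : 0 < β - s := sub_pos.2 hlt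
    have h0 := hs.tendsto_atTop_zero
    have : (β - s) ^ 2 / 2 ≤ 0 := by
      refine ge_of_tendsto' h0 fun k => ?_
      have hk : (0 : ℝ) < ((k + 1 : ℕ) : ℝ) := by positivity
      have hq := Real.quadratic_le_exp_of_nonneg (mul_pos hk ht).le
      have hp := mul_pos hk ht
      rw [one_div, inv_mul_eq_div, le_div_iff₀ (by positivity)]
      nlinarith
    have : 0 < (β - s) ^ 2 / 2 := by positivity
    linarith
  · intro hs
    have h2 := (summable_nat_add_iff 1).2 (Real.summable_one_div_nat_pow.2 (one_lt_two))
    refine Summable.of_nonneg_of_le (fun k => by positivity) (fun k => ?_) h2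
    refine mul_le_of_le_one_right (by positivity) ?_
    rw [Real.exp_le_one_iff]
    exact mul_nonpos_of_nonneg_of_nonpos (by positivity) (sub_nonpos.2 hs)

lemma aux_all : ∃ n : ℕ → ℕ, (∀ i, 0 < n i) ∧ ∀ β : ℝ,
      (Summable (fun k : ℕ => (n (k + 1) : ℝ) / ((k + 1).factorial : ℝ) *
        Real.exp (((k + 1 : ℕ) : ℝ) * β)) ↔ True) := by
  refine ⟨fun _ => 1, fun _ => one_pos, fun β => iff_true_intro ?_⟩
  have h := (summable_nat_add_iff 1).2 (Real.summable_pow_div_factorial (Real.exp β))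
  refine h.congr fun k => ?_
  rw [Real.exp_nat_mul]
  push_cast
  ring

lemma aux_main (P Q : ℝ → Prop)
    (hP : ∃ n : ℕ → ℕ, (∀ i, 0 < n i) ∧ ∀ β : ℝ,
      (Summable (fun k : ℕ => (n (k + 1) : ℝ) / ((k + 1).factorial : ℝ) *
        Real.exp (((k + 1 : ℕ) : ℝ) * β)) ↔ P β))
    (hQ : ∃ n : ℕ → ℕ, (∀ i, 0 < n i) ∧ ∀ β : ℝ,
      (Summable (fun k : ℕ => (n (k + 1) : ℝ) / ((k + 1).factorial : ℝ) *
        Real.exp (((k + 1 : ℕ) : ℝ) * β)) ↔ Q β)) :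
    ∃ a b c : ℕ → ℕ, (∀ i, 0 < a i) ∧ (∀ i, 0 < b i) ∧ (∀ i, 0 < c i) ∧
      Jset a b c = {β | P (-β) ∧ Q β} := by
  obtain ⟨b, hb, hb'⟩ := hP
  obtain ⟨c, hc, hc'⟩ := hQ
  refine ⟨fun i => if i = 0 then 1 else i, b, c, fun i => by dsimp only; split_ifs <;> omega, hb, hc, ?_⟩
  have hprod : ∀ k : ℕ, (∏ i ∈ Finset.range (k + 1),
      (((if i + 1 = 0 then 1 else i + 1 : ℕ)) : ℝ)) = ((k + 1).factorial : ℝ) := by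
    intro k
    rw [← Finset.prod_range_add_one_eq_factorial, Nat.cast_prod]
    refine Finset.prod_congr rfl fun i _ => ?_
    rw [if_neg (Nat.succ_ne_zero i)]
  ext β
  simp only [Jset, Set.mem_ofPred_eq, hprod]
  rw [hc' β, ← hb' (-β)]
  simp only [neg_mul, mul_neg]

/-- every interval of the six listed forms arises as `J(a,b,c)`. -/
theorem stmt_16 (r R : ℝ) (hr : 0 < r) (hrR : r ≤ R) (I : Set ℝ)
    (hI : I = Set.Icc r R ∨ I = Set.Ioc r R ∨ I = Set.Ico r R ∨ I = Set.Ioo r R ∨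
      I = Set.Ici r ∨ I = Set.Ioi r) :
    ∃ a b c : ℕ → ℕ, (∀ i, 0 < a i) ∧ (∀ i, 0 < b i) ∧ (∀ i, 0 < c i) ∧
      Jset a b c = I := by
  rcases hI with h | h | h | h | h | h <;> subst h
  · convert aux_main _ _ (aux_le (-r)) (aux_le R) using 9
    congr! 1; ext β; simp
  · convert aux_main _ _ (aux_lt (-r)) (aux_le R) using 9
    congr! 1; ext β; simp
  · convert aux_main _ _ (aux_le (-r)) (aux_lt R) using 9
    congr! 1; ext β; simp
  · convert aux_main _ _ (aux_lt (-r)) (aux_lt R) using 9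
    congr! 1; ext β; simp
  · convert aux_main _ _ (aux_le (-r)) aux_all using 9
    congr! 1; ext β; simp
  · convert aux_main _ _ (aux_lt (-r)) aux_all using 9
    congr! 1; ext β; simp
end
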